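/- Let f be a continuous real-valued function on (0, ∞) that is non-negative and not identically zero. Then the following are equivalent: (i) f is operator monotone decreasing on (0, ∞), i.e. for all bounded self-adjoint operators A, B on H with spectra contained in (0, ∞), A ≤ B implies f(B) ≤ f(A); (ii) there exist α ≥ 0 and a positive Borel measure μ on [0, ∞) with ∫_{[0,∞)} (1 + λ)^{-1} dμ(λ) < ∞ such that f(x) = α + ∫_{[0,∞)} 1/(x + λ) dμ(λ) for all x ∈ (0, ∞). -/

import Mathlib

open ContinuousLinearMap MeasureTheory
section ops
variable {H : Type*} [NormedAddCommGroup H] [InnerProductSpace ℂ H] [CompleteSpace H]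

/-- diagonal operator -/
noncomputable def opD {ι : Type*} [Fintype ι] (u : ι → H) (a : ι → ℝ) : H →L[ℂ] H :=
  1 + ∑ i, ((a i - 1 : ℝ) : ℂ) • InnerProductSpace.rankOne ℂ (u i) (u i)

lemma opD_apply {ι : Type*} [Fintype ι] (u : ι → H) (a : ι → ℝ) (x : H) :
    opD u a x = x + ∑ i, ((a i - 1 : ℝ) : ℂ) • (inner ℂ (u i) x • u i) := by
  simp [opD]

lemma opD_eigen {ι : Type*} [Fintype ι] (u : ι → H) (hu : Orthonormal ℂ u) (a : ι → ℝ) (j : ι) :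
    opD u a (u j) = (a j : ℂ) • u j := by
  classical
  rw [opD_apply, Finset.sum_eq_single j]
  · rw [inner_self_eq_norm_sq_to_K, hu.1 j, ← add_comm]
    simp [sub_smul]
  · intro i _ hij
    rw [hu.2 hij]; simp
  · simp

lemma opD_inner {ι : Type*} [Fintype ι] (u : ι → H) (a : ι → ℝ) (x : H) :
    inner ℂ (opD u a x) x = ((‖x‖^2 + ∑ i, (a i - 1) * ‖inner ℂ (u i) x‖^2 : ℝ) : ℂ) := by
  rw [opD_apply, inner_add_left, sum_inner]
  rw [Complex.ofReal_add, Complex.ofReal_sum]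
  congr 1
  · rw [inner_self_eq_norm_sq_to_K]; push_cast; rfl
  · refine Finset.sum_congr rfl fun i _ => ?_
    rw [inner_smul_left, inner_smul_left, Complex.conj_ofReal, Complex.ofReal_mul]
    congr 1
    rw [Complex.ofReal_pow]
    exact Complex.conj_mul' _

lemma opD_selfAdjoint {ι : Type*} [Fintype ι] (u : ι → H) (a : ι → ℝ) :
    IsSelfAdjoint (opD u a) := by
  rw [ContinuousLinearMap.isSelfAdjoint_iff_isSymmetric,
    LinearMap.isSymmetric_iff_inner_map_self_real]
  intro v
  have := opD_inner u a v
  simp only [ContinuousLinearMap.coe_coe]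
  rw [this, Complex.conj_ofReal]

lemma aeval_eigen (A : H →L[ℂ] H) (u : H) (a : ℝ) (h : A u = (a : ℂ) • u)
    (g : Polynomial ℝ) : (Polynomial.aeval A g) u = ((g.eval a : ℝ) : ℂ) • u := by
  induction g using Polynomial.induction_on' with
  | add p q hp hq => simp [hp, hq, add_smul]
  | monomial n c =>
    rw [Polynomial.aeval_monomial, Polynomial.eval_monomial]
    have : ∀ n : ℕ, (A^n) u = ((a^n : ℝ) : ℂ) • u := by
      intro n
      induction n with
      | zero => simp
      | succ n ih =>
        rw [pow_succ', mul_apply_eq_comp, ih, map_smul, h, smul_smul]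
        congr 1; push_cast; ring
    rw [mul_apply_eq_comp, this, map_smul]
    rw [ContinuousLinearMap.algebraMap_apply]
    rw [← Complex.coe_smul, smul_smul]; congr 1; push_cast; ring

lemma opD_spectrum {ι : Type*} [Fintype ι] (u : ι → H) (hu : Orthonormal ℂ u) (a : ι → ℝ) :
    spectrum ℝ (opD u a) ⊆ insert 1 (Set.range a) := by
  classical
  rcases subsingleton_or_nontrivial H with hH | hH
  · have : Subsingleton (H →L[ℂ] H) := inferInstance
    rw [spectrum.of_subsingleton]; simp
  set p : Polynomial ℝ := (∏ i, (Polynomial.X - Polynomial.C (a i))) * (Polynomial.X - Polynomial.C 1) with hp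
  have h0 : Polynomial.aeval (opD u a) p = 0 := by
    ext x
    rw [hp, map_mul, mul_apply_eq_comp]
    have : (Polynomial.aeval (opD u a)) (Polynomial.X - Polynomial.C (1:ℝ)) x
      = ∑ i, (((a i - 1 : ℝ) : ℂ) * inner ℂ (u i) x) • u i := by
      simp [opD_apply, smul_smul]
    rw [this, map_sum]
    apply Finset.sum_eq_zero
    intro i _
    rw [map_smul, aeval_eigen _ _ _ (opD_eigen u hu a i), Polynomial.eval_prod,
      Finset.prod_eq_zero (Finset.mem_univ i) (by simp)]
    simp
  intro z hz
  have := spectrum.subset_polynomial_aeval (opD u a) p ⟨z, hz, rfl⟩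
  rw [h0, spectrum.zero_eq] at this
  simp only [Set.mem_singleton_iff, hp, Polynomial.eval_mul, mul_eq_zero, Polynomial.eval_prod,
    Finset.prod_eq_zero_iff] at this
  simp [sub_eq_zero] at this
  rcases this with ⟨i, hi⟩ | h
  · right; exact ⟨i, hi.symm⟩
  · left; exact h

lemma opD_spectrumC {ι : Type*} [Fintype ι] (u : ι → H) (hu : Orthonormal ℂ u) (a : ι → ℝ)
    (ha : ∀ i, 0 < a i) :
    spectrum ℂ (opD u a) ⊆ (fun x : ℝ => (x : ℂ)) '' Set.Ioi (0 : ℝ) := by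
  have h := (opD_selfAdjoint u a).spectrumRestricts.algebraMap_image
  rw [← h]
  rintro _ ⟨x, hx, rfl⟩
  refine ⟨x, ?_, rfl⟩
  rcases opD_spectrum u hu a hx with rfl | ⟨i, rfl⟩
  · simp
  · exact ha i

lemma opD_cfc {ι : Type*} [Fintype ι] (u : ι → H) (hu : Orthonormal ℂ u) (a : ι → ℝ)
    (f : ℝ → ℝ) (i : ι) : cfc f (opD u a) (u i) = (f (a i) : ℂ) • u i := by
  classical
  set s : Finset ℝ := insert 1 (Finset.univ.image a)
  set g := Lagrange.interpolate s id f
  have hg : ∀ x ∈ s, g.eval x = f x := fun x hx =>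
    Lagrange.eval_interpolate_at_node (v := id) f (Function.injective_id.injOn) hx
  have h1 : cfc f (opD u a) = cfc g.eval (opD u a) := by
    apply cfc_congr
    intro x hx
    refine (hg x ?_).symm
    have := opD_spectrum u hu a hx
    simpa [s] using this
  rw [h1, cfc_polynomial g _ (opD_selfAdjoint u a), aeval_eigen _ _ _ (opD_eigen u hu a i), hg]
  simp [s]

lemma opD_key (f : ℝ → ℝ) {ι : Type*} [Fintype ι] (u : ι → H) (hu : Orthonormal ℂ u) (a : ι → ℝ)
    (s : ι → ℝ) :
    inner ℂ (cfc f (opD u a) (∑ i, (s i : ℂ) • u i)) (∑ i, (s i : ℂ) • u i)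
      = ((∑ i, (s i)^2 * f (a i) : ℝ) : ℂ) := by
  simp only [map_sum, map_smul, opD_cfc u hu, smul_smul]
  rw [hu.inner_sum]
  push_cast
  refine Finset.sum_congr rfl fun i _ => ?_
  simp; ring

lemma opD_mono (f : ℝ → ℝ)
    (hmono : ∀ A B : H →L[ℂ] H, IsSelfAdjoint A → IsSelfAdjoint B →
        spectrum ℂ A ⊆ (fun x : ℝ => (x : ℂ)) '' Set.Ioi (0 : ℝ) →
        spectrum ℂ B ⊆ (fun x : ℝ => (x : ℂ)) '' Set.Ioi (0 : ℝ) →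
        (B - A).IsPositive → (cfc f A - cfc f B).IsPositive)
    {ι κ : Type*} [Fintype ι] [Fintype κ] (u : ι → H) (hu : Orthonormal ℂ u)
    (w : κ → H) (hw : Orthonormal ℂ w) (a : ι → ℝ) (b : κ → ℝ) (ha : ∀ i, 0 < a i)
    (hb : ∀ i, 0 < b i)
    (hab : ∀ x : H, ∑ i, (a i - 1) * ‖inner ℂ (u i) x‖^2 ≤ ∑ j, (b j - 1) * ‖inner ℂ (w j) x‖^2)
    (s : ι → ℝ) (t : κ → ℝ) (hst : ∑ i, (s i : ℂ) • u i = ∑ j, (t j : ℂ) • w j) :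
    ∑ j, (t j)^2 * f (b j) ≤ ∑ i, (s i)^2 * f (a i) := by
  have hpos : (opD w b - opD u a).IsPositive := by
    rw [ContinuousLinearMap.isPositive_def']
    refine ⟨(opD_selfAdjoint w b).sub (opD_selfAdjoint u a), fun x => ?_⟩
    rw [ContinuousLinearMap.reApplyInnerSelf_apply, sub_apply, inner_sub_left, opD_inner, opD_inner, ← Complex.ofReal_sub]
    simp only [RCLike.re_to_complex, Complex.ofReal_re]
    linarith [hab x]
  have h := hmono _ _ (opD_selfAdjoint u a) (opD_selfAdjoint w b) (opD_spectrumC u hu a ha)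
    (opD_spectrumC w hw b hb) hpos
  have k1 := opD_key f u hu a s
  have k2 := opD_key f w hw b t
  have h2 := h.inner_nonneg_left (∑ i, (s i : ℂ) • u i)
  rw [sub_apply, inner_sub_left, k1, hst, k2, ← Complex.ofReal_sub] at h2
  have h3 := Complex.zero_le_real.1 h2
  linarith
end ops
open Polynomial in
lemma sos_mul {p p' : ℝ[X]} (h : ∃ q r : ℝ[X], p = q^2 + X * r^2)
    (h' : ∃ q r : ℝ[X], p' = q^2 + X * r^2) : ∃ q r : ℝ[X], p * p' = q^2 + X * r^2 := by
  obtain ⟨q, r, rfl⟩ := h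
  obtain ⟨s, t, rfl⟩ := h'
  exact ⟨q*s + X*r*t, q*t - r*s, by ring⟩

open Polynomial in
lemma nonneg_of_mul_nonneg_poly (c p : ℝ[X]) (hc : c ≠ 0) (hc0 : ∀ x : ℝ, 0 ≤ x → 0 ≤ c.eval x)
    (h : ∀ x : ℝ, 0 ≤ x → 0 ≤ (c * p).eval x) : ∀ x : ℝ, 0 ≤ x → 0 ≤ p.eval x := by
  intro x hx
  -- the roots of c are finite
  have hfin : {y | c.IsRoot y}.Finite := Polynomial.finite_setOfPred_isRoot hc
  have hev : ∀ᶠ y in nhdsWithin x (Set.Ioi x), 0 ≤ p.eval y := by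
    have h1 : ∀ᶠ y in nhdsWithin x (Set.Ioi x), y ∉ {y | c.IsRoot y} \ {x} := by
      apply mem_nhdsWithin_of_mem_nhds
      exact (hfin.subset Set.sdiff_subset).isClosed.isOpen_compl.mem_nhds (by simp)
    filter_upwards [h1, self_mem_nhdsWithin] with y hy hxy
    have hxy : x < y := hxy
    have h2 : c.eval y ≠ 0 := fun h0 => hy ⟨h0, by simpa using hxy.ne'⟩
    have h3 := hc0 y (by linarith)
    have h4 := h y (by linarith)
    rw [eval_mul] at h4
    exact nonneg_of_mul_nonneg_right h4 (lt_of_le_of_ne h3 (Ne.symm h2))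
  refine ge_of_tendsto (x := nhdsWithin x (Set.Ioi x)) ?_ hev
  exact (p.continuous.tendsto x).mono_left nhdsWithin_le_nhds

open Polynomial in
lemma sos_exists (n : ℕ) : ∀ p : ℝ[X], p.natDegree ≤ n → (∀ x : ℝ, 0 ≤ x → 0 ≤ p.eval x) →
    ∃ q r : ℝ[X], p = q^2 + X * r^2 := by
  induction n using Nat.strong_induction_on with
  | _ n ih =>
  intro p hp hpos
  by_cases hd : p.natDegree = 0
  · obtain ⟨c, rfl⟩ := natDegree_eq_zero.1 hd
    have : 0 ≤ c := by simpa using hpos 0 le_rfl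
    exact ⟨C (√c), 0, by rw [← C_pow, Real.sq_sqrt this]; simp⟩
  have hp0 : p ≠ 0 := by rintro rfl; simp at hd
  -- generic reduction
  have red : ∀ c : ℝ[X], c ≠ 0 → 1 ≤ c.natDegree → (∀ x : ℝ, 0 ≤ x → 0 ≤ c.eval x) →
      (∃ q r : ℝ[X], c = q^2 + X * r^2) → c ∣ p → ∃ q r : ℝ[X], p = q^2 + X * r^2 := by
    rintro c hc hc1 hcpos hcs ⟨p', rfl⟩
    have hp' : p' ≠ 0 := right_ne_zero_of_mul hp0
    rw [natDegree_mul hc hp'] at hp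
    exact sos_mul hcs (ih (n-1) (by omega) p' (by omega)
      (nonneg_of_mul_nonneg_poly c p' hc hcpos hpos))
  obtain ⟨z, hz⟩ : ∃ z : ℂ, aeval z p = 0 := by
    refine IsAlgClosed.exists_aeval_eq_zero _ p ?_
    intro h; exact hd (natDegree_eq_of_degree_eq_some h)
  by_cases him : z.im = 0
  · obtain ⟨a, rfl⟩ : ∃ a : ℝ, (a : ℂ) = z := ⟨z.re, by apply Complex.ext <;> simp [him]⟩
    have ha : p.IsRoot a := by
      have h1 : aeval (algebraMap ℝ ℂ a) p = 0 := hz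
      rw [aeval_algebraMap_apply] at h1
      simpa [IsRoot] using h1
    obtain ⟨p1, hp1⟩ := dvd_iff_isRoot.2 ha
    rcases le_or_gt a 0 with ha0 | ha0
    · refine red (X - C a) (X_sub_C_ne_zero a) (by simp) ?_ ?_ ⟨p1, hp1⟩
      · intro x hx; simp; linarith
      · refine ⟨C (√(-a)), 1, ?_⟩
        rw [← C_pow, Real.sq_sqrt (by linarith)]; simp; ring
    · have h2 : p1.eval a = 0 := by
        apply le_antisymm
        · have hev : ∀ᶠ y in nhdsWithin a (Set.Iio a), p1.eval y ≤ 0 := by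
            have h1 : ∀ᶠ y in nhdsWithin a (Set.Iio a), 0 < y :=
              mem_nhdsWithin_of_mem_nhds (isOpen_Ioi.mem_nhds ha0)
            filter_upwards [h1, self_mem_nhdsWithin] with y hy hya
            have hya : y < a := hya
            have := hpos y hy.le
            rw [hp1] at this
            simp at this
            nlinarith
          refine le_of_tendsto (x := nhdsWithin a (Set.Iio a)) ?_ hev
          exact (p1.continuous.tendsto a).mono_left nhdsWithin_le_nhds
        · have hev : ∀ᶠ y in nhdsWithin a (Set.Ioi a), 0 ≤ p1.eval y := by
            filter_upwards [self_mem_nhdsWithin] with y hya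
            have hya : a < y := hya
            have := hpos y (by linarith)
            rw [hp1] at this
            simp at this
            nlinarith
          refine ge_of_tendsto (x := nhdsWithin a (Set.Ioi a)) ?_ hev
          exact (p1.continuous.tendsto a).mono_left nhdsWithin_le_nhds
      obtain ⟨p2, hp2⟩ := dvd_iff_isRoot.2 h2
      refine red ((X - C a)^2) (pow_ne_zero _ (X_sub_C_ne_zero a)) (by simp) ?_ ?_
        ⟨p2, by rw [hp1, hp2]; ring⟩
      · intro x hx; simp; positivity
      · exact ⟨X - C a, 0, by simp⟩
  · have hdvd := p.quadratic_dvd_of_aeval_eq_zero_im_ne_zero hz him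
    set w := ‖z‖ with hw
    have hnd : (X ^ 2 - C (2 * z.re) * X + C (w ^ 2)).natDegree = 2 := by
      compute_degree!
    refine red _ ?_ (by omega) ?_ ?_ hdvd
    · intro h; rw [h] at hnd; simp at hnd
    · intro x hx
      have : w^2 = z.re^2 + z.im^2 := by rw [hw, Complex.sq_norm, Complex.normSq_apply]; ring
      simp [this]
      nlinarith [sq_nonneg (x - z.re), sq_nonneg z.im]
    · have : z.re ≤ w := Complex.re_le_norm z
      refine ⟨X - C w, C (√(2*w - 2*z.re)), ?_⟩
      rw [← C_pow, Real.sq_sqrt (by linarith)]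
      simp only [C_mul, C_sub, C_pow]
      have h2 : (C 2 : ℝ[X]) = 2 := rfl
      rw [h2]
      ring

open Polynomial in
lemma sos_degree (m : ℕ) (q r : ℝ[X]) (h : (q^2 + X * r^2).degree < ((2*m : ℕ) : WithBot ℕ)) :
    q.degree < m ∧ r.degree < m := by
  by_cases hq : q = 0
  · subst hq
    by_cases hr : r = 0
    · subst hr; simp
    · have hX : (X * r^2 : ℝ[X]) ≠ 0 := by simp [hr]
      simp only [ne_eq, OfNat.ofNat_ne_zero, not_false_eq_true, zero_pow, zero_add] at h
      rw [degree_eq_natDegree hX, natDegree_mul X_ne_zero (by simp [hr]), natDegree_pow,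
        natDegree_X] at h
      have h : 1 + 2 * r.natDegree < 2 * m := by exact_mod_cast h
      refine ⟨by simp, ?_⟩
      rw [degree_eq_natDegree hr]; norm_cast; omega
  · by_cases hr : r = 0
    · subst hr
      have hX : (q^2 : ℝ[X]) ≠ 0 := by simp [hq]
      simp only [ne_eq, OfNat.ofNat_ne_zero, not_false_eq_true, zero_pow, mul_zero, add_zero] at h
      rw [degree_eq_natDegree hX, natDegree_pow] at h
      have h : 2 * q.natDegree < 2 * m := by exact_mod_cast h
      refine ⟨?_, by simp⟩
      rw [degree_eq_natDegree hq]; norm_cast; omega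
    · have hX : (X * r^2 : ℝ[X]) ≠ 0 := by simp [hr]
      have hX' : (q^2 : ℝ[X]) ≠ 0 := by simp [hq]
      have e1 : (X * r^2 : ℝ[X]).degree = ((1 + 2 * r.natDegree : ℕ) : WithBot ℕ) := by
        rw [degree_eq_natDegree hX, natDegree_mul X_ne_zero (by simp [hr]), natDegree_pow,
          natDegree_X]
      have e2 : (q^2 : ℝ[X]).degree = ((2 * q.natDegree : ℕ) : WithBot ℕ) := by
        rw [degree_eq_natDegree hX', natDegree_pow]
      have h : max (q^2 : ℝ[X]).degree (X * r^2 : ℝ[X]).degree < ((2*m : ℕ) : WithBot ℕ) := by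
        have hne : (q^2 : ℝ[X]).degree ≠ (X * r^2 : ℝ[X]).degree := by
          rw [e1, e2]; norm_cast; omega
        rcases lt_or_gt_of_ne hne with hlt | hlt
        · rwa [max_eq_right hlt.le, ← degree_add_eq_right_of_degree_lt hlt]
        · rwa [max_eq_left hlt.le, ← degree_add_eq_left_of_degree_lt hlt]
      rw [e1, e2, max_lt_iff] at h
      have h1 : 2 * q.natDegree < 2 * m := by exact_mod_cast h.1
      have h2 : 1 + 2 * r.natDegree < 2 * m := by exact_mod_cast h.2
      rw [degree_eq_natDegree hr, degree_eq_natDegree hq]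
      constructor <;> norm_cast <;> omega

open Polynomial in
lemma sos_neg (m : ℕ) (p : ℝ[X]) (hp : p.degree < (2*m : ℕ))
    (hpos : ∀ x : ℝ, 0 ≤ x → 0 ≤ p.eval (-x)) :
    ∃ q r : ℝ[X], q.degree < m ∧ r.degree < m ∧ ∀ x, p.eval x = (q.eval x)^2 - x * (r.eval x)^2 := by
  have hdX : (-X : ℝ[X]).natDegree = 1 := by simp
  have hdeg : ∀ p : ℝ[X], (p.comp (-X)).degree = p.degree := by
    intro p
    by_cases h : p = 0
    · simp [h]
    · have h2 : p.comp (-X) ≠ 0 := by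
        intro h0
        have : (p.comp (-X)).comp (-X) = p := by rw [Polynomial.comp_assoc]; simp
        rw [h0] at this; simp at this; exact h this.symm
      rw [degree_eq_natDegree h, degree_eq_natDegree h2, natDegree_comp]; simp
  obtain ⟨q, r, h⟩ := sos_exists _ (p.comp (-X)) le_rfl (by intro x hx; simpa using hpos x hx)
  have := sos_degree m q r (by rw [← h, hdeg]; exact hp)
  refine ⟨q.comp (-X), r.comp (-X), by rw [hdeg]; exact this.1, by rw [hdeg]; exact this.2, ?_⟩
  intro x
  have := congrArg (eval (-x)) h
  simp at this
  simp [this]; ring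

/-- nodal weight -/
noncomputable def nW (S : Finset ℝ) (x : ℝ) : ℝ := (∏ y ∈ S.erase x, (x - y))⁻¹

lemma nW_ne (S : Finset ℝ) (x : ℝ) : nW S x ≠ 0 := by
  unfold nW
  refine inv_ne_zero (Finset.prod_ne_zero_iff.2 fun y hy => ?_)
  exact sub_ne_zero.2 (Finset.ne_of_mem_erase hy).symm

open Polynomial in
lemma nW_sum (S : Finset ℝ) (g : ℝ[X]) (hg : g.degree < S.card) :
    ∑ x ∈ S, nW S x * g.eval x = g.coeff (S.card - 1) := by
  rw [Lagrange.coeff_eq_sum (v := id) (Function.injective_id.injOn) hg]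
  refine Finset.sum_congr rfl fun x _ => ?_
  simp [nW, div_eq_inv_mul]

open Polynomial in
lemma deg_mul_lt {m : ℕ} {q r : ℝ[X]} (hq : q.degree < m) (hr : r.degree < m) :
    (q * r).degree < ((2 * m - 1 : ℕ) : WithBot ℕ) := by
  by_cases h : q * r = 0
  · rw [h]; simp
  · have h1 := left_ne_zero_of_mul h
    have h2 := right_ne_zero_of_mul h
    rw [degree_eq_natDegree h, natDegree_mul h1 h2]
    rw [degree_eq_natDegree h1] at hq
    rw [degree_eq_natDegree h2] at hr
    norm_cast at *
    omega

open Polynomial in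
lemma nW_mul (S : Finset ℝ) (m : ℕ) (hS : S.card = 2 * m) (q r : ℝ[X]) (hq : q.degree < m)
    (hr : r.degree < m) : ∑ x ∈ S, nW S x * (q.eval x * r.eval x) = 0 := by
  have h := deg_mul_lt hq hr
  have := nW_sum S (q * r) (h.trans_le (by rw [hS]; norm_cast; omega))
  simp only [eval_mul] at this
  rw [this, hS]
  exact coeff_eq_zero_of_degree_lt h

open Polynomial in
lemma nW_X_mul (S : Finset ℝ) (m : ℕ) (hS : S.card = 2 * m) (q : ℝ[X]) (hq : q.degree < m) :
    0 ≤ ∑ x ∈ S, nW S x * (x * (q.eval x * q.eval x)) := by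
  rcases Nat.eq_zero_or_pos m with rfl | hm
  · have : S = ∅ := by simpa using hS
    simp [this]
  have h := deg_mul_lt hq hq
  have h1 : (X * (q * q)).degree < ((2 * m : ℕ) : WithBot ℕ) := by
    by_cases h0 : q * q = 0
    · rw [h0, mul_zero, degree_zero]; exact WithBot.bot_lt_coe _
    · rw [degree_eq_natDegree (mul_ne_zero X_ne_zero h0), natDegree_mul X_ne_zero h0, natDegree_X]
      rw [degree_eq_natDegree h0] at h
      norm_cast at *
      omega
  have := nW_sum S (X * (q * q)) (by rw [hS]; exact h1)
  simp only [eval_mul, eval_X] at this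
  rw [this, hS]
  obtain ⟨k, rfl⟩ : ∃ k, m = k + 1 := ⟨m - 1, by omega⟩
  have e : 2 * (k + 1) - 1 = (k + k) + 1 := by omega
  rw [e, coeff_X_mul, coeff_mul_add_eq_of_natDegree_le]
  · exact mul_self_nonneg _
  all_goals
    by_cases h0 : q = 0
    · simp [h0]
    · rw [degree_eq_natDegree h0] at hq
      norm_cast at hq
      omega

open Polynomial in
lemma nW_card_pos (S : Finset ℝ) (m : ℕ) (hS : S.card = 2 * m) (e : ℝ) (he : e ≠ 0) :
    m ≤ (S.filter (fun x => 0 < e * nW S x)).card := by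
  by_contra! hlt
  set P := S.filter (fun x => 0 < e * nW S x) with hP
  set g : ℝ[X] := Lagrange.nodal P id
  have hg : g.degree < m := by rw [Lagrange.degree_nodal]; exact_mod_cast hlt
  have h0 := nW_mul S m hS g g hg hg
  have h1 : ∑ x ∈ S, e * (nW S x * (g.eval x * g.eval x)) < 0 := by
    obtain ⟨y, hy, hyP⟩ : ∃ y ∈ S, y ∉ P := Finset.exists_mem_notMem_of_card_lt_card (by omega)
    have hneg : ∀ x ∈ S, x ∉ P → e * (nW S x * (g.eval x * g.eval x)) < 0 := by
      intro x hx hxP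
      have : e * nW S x < 0 := by
        refine lt_of_le_of_ne ?_ (mul_ne_zero he (nW_ne S x))
        by_contra! hh
        exact hxP (Finset.mem_filter.2 ⟨hx, hh⟩)
      have hgx : g.eval x ≠ 0 := Lagrange.eval_nodal_not_at_node (by
        intro i hi hxi
        simp at hxi
        exact hxP (hxi ▸ hi))
      rw [← mul_assoc]
      exact mul_neg_of_neg_of_pos this (mul_self_pos.2 hgx)
    refine Finset.sum_neg' (fun x hx => ?_) ⟨y, hy, hneg y hy hyP⟩
    by_cases hxP : x ∈ P
    · have : g.eval x = 0 := Lagrange.eval_nodal_at_node (v := id) hxP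
      simp [this]
    · exact (hneg x hx hxP).le
  rw [← Finset.mul_sum, h0] at h1
  simp at h1

lemma nW_split (S : Finset ℝ) (m : ℕ) (hS : S.card = 2 * m) :
    (S.filter (fun x => nW S x < 0)).card = m ∧ (S.filter (fun x => ¬ nW S x < 0)).card = m := by
  have h1 := nW_card_pos S m hS 1 one_ne_zero
  have h2 := nW_card_pos S m hS (-1) (by norm_num)
  have h3 := Finset.card_filter_add_card_filter_not (s := S) (fun x => nW S x < 0)
  have e1 : (S.filter (fun x => 0 < 1 * nW S x)) = S.filter (fun x => ¬ nW S x < 0) := by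
    refine Finset.filter_congr fun x _ => ?_
    rw [one_mul, not_lt]
    exact ⟨le_of_lt, fun h => lt_of_le_of_ne h (nW_ne S x).symm⟩
  have e2 : (S.filter (fun x => 0 < -1 * nW S x)) = S.filter (fun x => nW S x < 0) := by
    refine Finset.filter_congr fun x _ => ?_
    constructor <;> intro h <;> linarith
  rw [e1] at h1
  rw [e2] at h2
  omega


section quad
variable {H : Type*} [NormedAddCommGroup H] [InnerProductSpace ℂ H] [CompleteSpace H]

lemma exists_orthonormal_fin (hinf : ¬ FiniteDimensional ℂ H) (ι : Type*) [Finite ι] :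
    ∃ u : ι → H, Orthonormal ℂ u := by
  obtain ⟨w, b, hb⟩ := exists_hilbertBasis ℂ H
  have hw : Infinite w := by
    by_contra hfin
    rw [not_infinite_iff_finite] at hfin
    have := Fintype.ofFinite w
    exact hinf (b.toOrthonormalBasis.toBasis.finiteDimensional_of_finite)
  obtain ⟨n, ⟨e⟩⟩ := Finite.exists_equiv_fin ι
  exact ⟨fun i => b (Infinite.natEmbedding w (e i)), b.orthonormal.comp _
    ((Infinite.natEmbedding w).injective.comp (Fin.val_injective.comp e.injective))⟩

open Polynomial in
lemma quad_mono (hinf : ¬ FiniteDimensional ℂ H) (f : ℝ → ℝ)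
    (hmono : ∀ A B : H →L[ℂ] H, IsSelfAdjoint A → IsSelfAdjoint B →
        spectrum ℂ A ⊆ (fun x : ℝ => (x : ℂ)) '' Set.Ioi (0 : ℝ) →
        spectrum ℂ B ⊆ (fun x : ℝ => (x : ℂ)) '' Set.Ioi (0 : ℝ) →
        (B - A).IsPositive → (cfc f A - cfc f B).IsPositive)
    {ι κ : Type} [Fintype ι] [Fintype κ] [DecidableEq ι] [DecidableEq κ] (m : ℕ)
    (hι : Fintype.card ι = m) (hκ : Fintype.card κ = m)
    (a α : ι → ℝ) (b β : κ → ℝ) (hai : Function.Injective a) (hbi : Function.Injective b)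
    (ha : ∀ i, 0 < a i) (hb : ∀ i, 0 < b i) (hα : ∀ i, 0 < α i) (hβ : ∀ i, 0 < β i)
    (h1 : ∀ q r : ℝ[X], q.degree < m → r.degree < m →
      ∑ i, α i * (q.eval (a i) * r.eval (a i)) = ∑ j, β j * (q.eval (b j) * r.eval (b j)))
    (h2 : ∀ q : ℝ[X], q.degree < m →
      ∑ i, α i * (a i * (q.eval (a i) * q.eval (a i)))
        ≤ ∑ j, β j * (b j * (q.eval (b j) * q.eval (b j))))
    (q : ℝ[X]) (hq : q.degree < m) :
    ∑ j, β j * (q.eval (b j))^2 * f (b j) ≤ ∑ i, α i * (q.eval (a i))^2 * f (a i) := by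
  obtain ⟨u, hu⟩ := exists_orthonormal_fin hinf ι
  set Φ : ℝ[X] → H := fun g => ∑ i, ((√(α i) * g.eval (a i) : ℝ) : ℂ) • u i with hΦ
  set ℓ : κ → ℝ[X] := fun j => Lagrange.basis Finset.univ b j with hℓ
  have hℓdeg : ∀ j, (ℓ j).degree < m := by
    intro j
    rw [hℓ]; simp only
    rw [Lagrange.degree_basis hbi.injOn (Finset.mem_univ j)]
    have : 0 < m := by rw [← hκ]; exact Fintype.card_pos_iff.2 ⟨j⟩
    simp only [Finset.card_univ, hκ]
    norm_cast; omega
  have hℓself : ∀ j, (ℓ j).eval (b j) = 1 := fun j =>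
    Lagrange.eval_basis_self hbi.injOn (Finset.mem_univ j)
  have hℓne : ∀ j k, k ≠ j → (ℓ j).eval (b k) = 0 := fun j k h =>
    Lagrange.eval_basis_of_ne h.symm (Finset.mem_univ k)
  have inu : ∀ i g, inner ℂ (u i) (Φ g) = ((√(α i) * g.eval (a i) : ℝ) : ℂ) := by
    intro i g
    exact hu.inner_right_fintype _ i
  have inΦ : ∀ g h : ℝ[X], g.degree < m → h.degree < m → inner ℂ (Φ g) (Φ h) =
      ((∑ j, β j * (g.eval (b j) * h.eval (b j)) : ℝ) : ℂ) := by
    intro g h hg hh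
    rw [← h1 g h hg hh]
    simp only [hΦ]
    rw [hu.inner_sum]
    push_cast
    refine Finset.sum_congr rfl fun i _ => ?_
    simp only [map_mul, Complex.conj_ofReal]
    have : ((√(α i) : ℝ) : ℂ) * ((√(α i) : ℝ) : ℂ) = (α i : ℂ) := by
      rw [← Complex.ofReal_mul, Real.mul_self_sqrt (hα i).le]
    rw [← this]; ring
  set w : κ → H := fun j => (((√(β j))⁻¹ : ℝ) : ℂ) • Φ (ℓ j) with hw
  have sqβ : ∀ j, (√(β j))⁻¹ * β j = √(β j) := by
    intro j
    have h0 : √(β j) ≠ 0 := (Real.sqrt_pos.2 (hβ j)).ne'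
    have : β j = √(β j) * √(β j) := (Real.mul_self_sqrt (hβ j).le).symm
    nth_rewrite 2 [this]
    field_simp
  have inw : ∀ (j : κ) (g : ℝ[X]), g.degree < m → inner ℂ (w j) (Φ g) = ((√(β j) * g.eval (b j) : ℝ) : ℂ) := by
    intro j g hg
    simp only [hw]
    rw [inner_smul_left, inΦ _ _ (hℓdeg j) hg, Complex.conj_ofReal, ← Complex.ofReal_mul]
    congr 1
    rw [Finset.sum_eq_single j]
    · rw [hℓself, ← mul_assoc, sqβ, one_mul]
    · intro k _ hk
      rw [hℓne j k hk]; simp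
    · simp
  have hwo : Orthonormal ℂ w := by
    rw [orthonormal_iff_ite]
    intro j k
    conv_lhs => rw [show w k = (((√(β k))⁻¹ : ℝ) : ℂ) • Φ (ℓ k) from rfl]
    rw [inner_smul_right, inw j _ (hℓdeg k), ← Complex.ofReal_mul]
    split_ifs with h
    · subst h
      rw [hℓself, mul_one, inv_mul_cancel₀ (Real.sqrt_pos.2 (hβ j)).ne']; simp
    · rw [hℓne k j h]; simp
  have hΦw : ∀ g : ℝ[X], g.degree < m → Φ g = ∑ j, ((√(β j) * g.eval (b j) : ℝ) : ℂ) • w j := by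
    intro g hg
    have hg' : g.degree < (Finset.univ : Finset κ).card := by simpa [hκ] using hg
    have e := Lagrange.eq_interpolate (s := Finset.univ) (v := b) hbi.injOn hg'
    have e' : ∀ i, g.eval (a i) = ∑ j, g.eval (b j) * (ℓ j).eval (a i) := by
      intro i
      conv_lhs => rw [e]
      rw [Lagrange.interpolate_apply, eval_finsetSum]
      simp [hℓ]
    have e2 : ∀ j, ((√(β j) * g.eval (b j) : ℝ) : ℂ) • w j = ((g.eval (b j) : ℝ) : ℂ) • Φ (ℓ j) := by
      intro j
      simp only [hw]
      rw [smul_smul, ← Complex.ofReal_mul]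
      congr 2
      have h0 : √(β j) ≠ 0 := (Real.sqrt_pos.2 (hβ j)).ne'
      field_simp
    simp only [e2]
    simp only [hΦ, Finset.smul_sum]
    rw [Finset.sum_comm]
    refine Finset.sum_congr rfl fun i _ => ?_
    simp only [smul_smul]
    rw [← Finset.sum_smul]
    congr 1
    rw [e' i]
    push_cast
    rw [Finset.mul_sum]
    refine Finset.sum_congr rfl fun j _ => ?_
    ring
  have main := opD_mono f hmono u hu w hwo a b ha hb ?_ (fun i => √(α i) * q.eval (a i))
    (fun j => √(β j) * q.eval (b j)) (hΦw q hq)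
  · simpa only [mul_pow, Real.sq_sqrt (hα _).le, Real.sq_sqrt (hβ _).le] using main
  intro x
  set g1 : ℝ[X] := Lagrange.interpolate Finset.univ a (fun i => (√(α i))⁻¹ * (inner ℂ (u i) x).re)
  set g2 : ℝ[X] := Lagrange.interpolate Finset.univ a (fun i => (√(α i))⁻¹ * (inner ℂ (u i) x).im)
  have hg1 : g1.degree < m := by
    have := Lagrange.degree_interpolate_lt (s := Finset.univ) (v := a)
      (fun i => (√(α i))⁻¹ * (inner ℂ (u i) x).re) hai.injOn
    rwa [Finset.card_univ, hι] at this
  have hg2 : g2.degree < m := by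
    have := Lagrange.degree_interpolate_lt (s := Finset.univ) (v := a)
      (fun i => (√(α i))⁻¹ * (inner ℂ (u i) x).im) hai.injOn
    rwa [Finset.card_univ, hι] at this
  have eg1 : ∀ i, √(α i) * g1.eval (a i) = (inner ℂ (u i) x).re := by
    intro i
    have h0 : √(α i) ≠ 0 := (Real.sqrt_pos.2 (hα i)).ne'
    rw [Lagrange.eval_interpolate_at_node _ hai.injOn (Finset.mem_univ i)]
    field_simp
  have eg2 : ∀ i, √(α i) * g2.eval (a i) = (inner ℂ (u i) x).im := by
    intro i
    have h0 : √(α i) ≠ 0 := (Real.sqrt_pos.2 (hα i)).ne'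
    rw [Lagrange.eval_interpolate_at_node _ hai.injOn (Finset.mem_univ i)]
    field_simp
  set y : H := Φ g1 + Complex.I • Φ g2 with hy
  have huy : ∀ i, inner ℂ (u i) y = inner ℂ (u i) x := by
    intro i
    rw [hy, inner_add_right, inner_smul_right, inu, inu, eg1, eg2]
    apply Complex.ext <;> simp
  have hwy : ∀ j, inner ℂ (w j) x = inner ℂ (w j) y := by
    intro j
    simp only [hw, inner_smul_left]
    congr 1
    simp only [hΦ, sum_inner, inner_smul_left, huy]
  have nu : ∀ i, ‖inner ℂ (u i) x‖^2 = α i * (g1.eval (a i) * g1.eval (a i)) +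
      α i * (g2.eval (a i) * g2.eval (a i)) := by
    intro i
    rw [Complex.sq_norm, Complex.normSq_apply, ← eg1, ← eg2]
    have : α i = √(α i) * √(α i) := (Real.mul_self_sqrt (hα i).le).symm
    linear_combination (-(g1.eval (a i) * g1.eval (a i)) - (g2.eval (a i) * g2.eval (a i))) * this
  have nw : ∀ j, ‖inner ℂ (w j) x‖^2 = β j * (g1.eval (b j) * g1.eval (b j)) +
      β j * (g2.eval (b j) * g2.eval (b j)) := by
    intro j
    rw [hwy, hy, inner_add_right, inner_smul_right, inw _ _ hg1, inw _ _ hg2,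
      Complex.sq_norm, Complex.normSq_apply]
    have : β j = √(β j) * √(β j) := (Real.mul_self_sqrt (hβ j).le).symm
    simp
    linear_combination (-(g1.eval (b j) * g1.eval (b j)) - (g2.eval (b j) * g2.eval (b j))) * this
  simp only [nu, nw]
  have a1 := h1 g1 g1 hg1 hg1
  have a2 := h1 g2 g2 hg2 hg2
  have b1 := h2 g1 hg1
  have b2 := h2 g2 hg2
  have el : ∀ {τ : Type} [Fintype τ] (c γ p r : τ → ℝ), ∑ i, (c i - 1) * (γ i * p i + γ i * r i)
     = ∑ i, γ i * (c i * p i) + ∑ i, γ i * (c i * r i) - ∑ i, γ i * p i - ∑ i, γ i * r i := by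
    intro τ _ c γ p r
    rw [← Finset.sum_add_distrib, ← Finset.sum_sub_distrib, ← Finset.sum_sub_distrib]
    exact Finset.sum_congr rfl fun i _ => by ring
  rw [el a α (fun i => g1.eval (a i) * g1.eval (a i)) (fun i => g2.eval (a i) * g2.eval (a i)),
    el b β (fun i => g1.eval (b i) * g1.eval (b i)) (fun i => g2.eval (b i) * g2.eval (b i))]
  linarith

open Polynomial in
lemma loewner_C1 (hinf : ¬ FiniteDimensional ℂ H) (f : ℝ → ℝ)
    (hmono : ∀ A B : H →L[ℂ] H, IsSelfAdjoint A → IsSelfAdjoint B →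
        spectrum ℂ A ⊆ (fun x : ℝ => (x : ℂ)) '' Set.Ioi (0 : ℝ) →
        spectrum ℂ B ⊆ (fun x : ℝ => (x : ℂ)) '' Set.Ioi (0 : ℝ) →
        (B - A).IsPositive → (cfc f A - cfc f B).IsPositive)
    (S : Finset ℝ) (hS : ∀ x ∈ S, 0 < x) (m : ℕ) (hm : S.card = 2 * m)
    (q : ℝ[X]) (hq : q.degree < m) :
    ∑ x ∈ S, nW S x * (q.eval x)^2 * f x ≤ 0 := by
  classical
  obtain ⟨c1, c2⟩ := nW_split S m hm
  set P := S.filter (fun x => nW S x < 0) with hP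
  set Q := S.filter (fun x => ¬ nW S x < 0) with hQ
  have split : ∀ F : ℝ → ℝ, ∑ x ∈ S, nW S x * F x =
      ∑ j : Q, nW S j * F j - ∑ i : P, (- nW S i) * F i := by
    intro F
    rw [Finset.sum_coe_sort Q (fun x => nW S x * F x),
      Finset.sum_coe_sort P (fun x => (-nW S x) * F x),
      ← Finset.sum_filter_add_sum_filter_not S (fun x => nW S x < 0)]
    simp only [neg_mul, Finset.sum_neg_distrib]
    ring
  have := quad_mono hinf f hmono m (ι := P) (κ := Q) (by simpa using c1) (by simpa using c2)
    (fun i => i) (fun i => - nW S i) (fun j => j) (fun j => nW S j) Subtype.val_injective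
    Subtype.val_injective (fun i => hS _ (Finset.mem_filter.1 i.2).1)
    (fun i => hS _ (Finset.mem_filter.1 i.2).1)
    (fun i => by have := (Finset.mem_filter.1 i.2).2; linarith)
    (fun i => lt_of_le_of_ne (not_lt.1 (Finset.mem_filter.1 i.2).2) (nW_ne S i).symm)
    (fun q r hq hr => by
      have := nW_mul S m hm q r hq hr
      rw [split (fun x => q.eval x * r.eval x)] at this
      linarith)
    (fun q hq => by
      have := nW_X_mul S m hm q hq
      rw [split (fun x => x * (q.eval x * q.eval x))] at this
      linarith) q hq
  have e := split (fun x => (q.eval x)^2 * f x)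
  simp only [mul_assoc] at *
  rw [e]
  linarith
end quad


lemma nW_insert_ne (S : Finset ℝ) (z x : ℝ) (hz : z ∉ S) (hx : x ∈ S) :
    nW (insert z S) x = nW S x * (x - z)⁻¹ := by
  have hne : z ≠ x := fun h => hz (h ▸ hx)
  unfold nW
  rw [Finset.erase_insert_of_ne hne, Finset.prod_insert (by
    intro h; exact hz (Finset.mem_of_mem_erase h)), mul_inv, mul_comm]

section c3
variable (f : ℝ → ℝ) (hf0 : ∀ x : ℝ, 0 < x → 0 ≤ f x)
  (C1 : ∀ S : Finset ℝ, (∀ x ∈ S, 0 < x) → ∀ m : ℕ, S.card = 2 * m →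
    ∀ q : Polynomial ℝ, q.degree < m → ∑ x ∈ S, nW S x * (q.eval x)^2 * f x ≤ 0)
include hf0 C1

open Polynomial in
lemma loewner_C2_aux (S : Finset ℝ) (hS : ∀ x ∈ S, 0 < x) (m : ℕ) (hm : S.card = 2 * m)
    (r : ℝ[X]) (hr : r.degree < m) (δ : ℝ) (hδ : 0 < δ) (hδ1 : δ < 1) (hδS : ∀ x ∈ S, δ < x)
    (hδS' : ∀ x ∈ S, x < δ⁻¹) :
    0 ≤ ∑ x ∈ S, nW S x * ((x - δ) * (1 - x * δ)⁻¹ * (r.eval x)^2) * f x := by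
  set R := δ⁻¹ with hR
  have hδR : δ < R := by
    have : 1 < R := (one_lt_inv₀ hδ).2 hδ1
    linarith
  have hRS : R ∉ S := fun h => lt_irrefl _ (hδS' R h)
  have hδS0 : δ ∉ insert R S := by
    simp only [Finset.mem_insert, not_or]
    exact ⟨hδR.ne, fun h => lt_irrefl _ (hδS δ h)⟩
  have hRpos : 0 < R := by positivity
  have h := C1 (insert δ (insert R S)) (by
    intro x hx
    simp only [Finset.mem_insert] at hx
    rcases hx with rfl | rfl | hx
    · exact hδ
    · exact hRpos
    · exact hS x hx) (m+1) (by
      rw [Finset.card_insert_of_notMem hδS0, Finset.card_insert_of_notMem hRS, hm]; ring)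
      ((X - C δ) * r) (by
        by_cases h0 : r = 0
        · rw [h0, mul_zero, degree_zero]; exact WithBot.bot_lt_coe _
        · rw [degree_eq_natDegree (mul_ne_zero (X_sub_C_ne_zero _) h0),
            natDegree_mul (X_sub_C_ne_zero _) h0, natDegree_X_sub_C]
          rw [degree_eq_natDegree h0] at hr
          norm_cast at *
          omega)
  rw [Finset.sum_insert hδS0, Finset.sum_insert hRS] at h
  have hRterm : 0 ≤ nW (insert δ (insert R S)) R * (((X - C δ) * r).eval R)^2 * f R := by
    refine mul_nonneg (mul_nonneg ?_ (sq_nonneg _)) (hf0 _ hRpos)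
    unfold nW
    refine inv_nonneg.2 (Finset.prod_nonneg fun y hy => ?_)
    simp only [Finset.mem_erase, Finset.mem_insert] at hy
    rcases hy with ⟨h1, rfl | h2 | h3⟩
    · linarith
    · exact absurd h2 h1
    · linarith [hδS' y h3]
  have hδterm : (((X - C δ) * r).eval δ) = 0 := by simp
  rw [hδterm] at h
  have hsum : ∑ x ∈ S, nW (insert δ (insert R S)) x * (((X - C δ) * r).eval x)^2 * f x =
      - δ * ∑ x ∈ S, nW S x * ((x - δ) * (1 - x * δ)⁻¹ * (r.eval x)^2) * f x := by
    rw [Finset.mul_sum]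
    refine Finset.sum_congr rfl fun x hx => ?_
    rw [nW_insert_ne _ _ _ hδS0 (Finset.mem_insert_of_mem hx), nW_insert_ne _ _ _ hRS hx]
    have e1 : x - δ ≠ 0 := by linarith [hδS x hx] |> fun (h : 0 < x - δ) => h.ne'
    have e2 : (x - R)⁻¹ = - δ * (1 - x * δ)⁻¹ := by
      have : x - R = - δ⁻¹ * (1 - x * δ) := by rw [hR]; field_simp; ring
      rw [this, mul_inv, ← neg_inv, inv_inv]
    rw [e2]
    simp only [eval_mul, eval_sub, eval_X, eval_C]
    field_simp
  rw [hsum] at h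
  have h4 : - δ * ∑ x ∈ S, nW S x * ((x - δ) * (1 - x * δ)⁻¹ * (r.eval x)^2) * f x ≤ 0 := by
    simp only [ne_eq, OfNat.ofNat_ne_zero, not_false_eq_true, zero_pow, mul_zero, zero_mul,
      zero_add] at h
    linarith
  nlinarith

open Polynomial in
lemma loewner_C2 (S : Finset ℝ) (hS : ∀ x ∈ S, 0 < x) (m : ℕ) (hm : S.card = 2 * m)
    (r : ℝ[X]) (hr : r.degree < m) :
    0 ≤ ∑ x ∈ S, nW S x * (x * (r.eval x)^2) * f x := by
  have ht : Filter.Tendsto (fun δ : ℝ => ∑ x ∈ S, nW S x * ((x - δ) * (1 - x * δ)⁻¹ * (r.eval x)^2) * f x)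
      (nhdsWithin 0 (Set.Ioi 0)) (nhds (∑ x ∈ S, nW S x * ((x - 0) * (1 - x * 0)⁻¹ * (r.eval x)^2) * f x)) := by
    refine Filter.Tendsto.mono_left ?_ nhdsWithin_le_nhds
    refine tendsto_finsetSum _ fun x hx => ?_
    have : ContinuousAt (fun δ : ℝ => nW S x * ((x - δ) * (1 - x * δ)⁻¹ * (r.eval x)^2) * f x) 0 := by
      have : (1 - x * 0) ≠ (0:ℝ) := by simp
      fun_prop (disch := assumption)
    exact this
  simp only [sub_zero, mul_zero, inv_one, mul_one] at ht
  refine ge_of_tendsto ht ?_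
  have e1 : ∀ᶠ δ in nhdsWithin (0:ℝ) (Set.Ioi 0), ∀ x ∈ S, δ < x := by
    rw [Filter.eventually_all_finset]
    intro x hx
    exact mem_nhdsWithin_of_mem_nhds (isOpen_Iio.mem_nhds (hS x hx))
  have e2 : ∀ᶠ δ in nhdsWithin (0:ℝ) (Set.Ioi 0), ∀ x ∈ S, δ < x⁻¹ := by
    rw [Filter.eventually_all_finset]
    intro x hx
    exact mem_nhdsWithin_of_mem_nhds (isOpen_Iio.mem_nhds (inv_pos.2 (hS x hx)))
  have e3 : ∀ᶠ δ in nhdsWithin (0:ℝ) (Set.Ioi 0), δ < 1 :=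
    mem_nhdsWithin_of_mem_nhds (isOpen_Iio.mem_nhds (Set.mem_Iio.2 one_pos))
  filter_upwards [e1, e2, e3, self_mem_nhdsWithin] with δ h1 h2 h3 h4
  exact loewner_C2_aux f hf0 C1 S hS m hm r hr δ h4 h3 h1 (fun x hx =>
    (lt_inv_comm₀ (hS x hx) h4).2 (h2 x hx))

open Polynomial in
lemma loewner_C3 (S : Finset ℝ) (hS : ∀ x ∈ S, 0 < x) (m : ℕ) (hm : S.card = 2 * m)
    (p : ℝ[X]) (hp : p.degree < (2 * m : ℕ)) (hpos : ∀ x : ℝ, 0 ≤ x → 0 ≤ p.eval (-x)) :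
    ∑ x ∈ S, nW S x * p.eval x * f x ≤ 0 := by
  obtain ⟨q, r, hq, hr, h⟩ := sos_neg m p hp hpos
  have h1 := C1 S hS m hm q hq
  have h2 := loewner_C2 f hf0 C1 S hS m hm r hr
  have : ∑ x ∈ S, nW S x * p.eval x * f x = ∑ x ∈ S, nW S x * (q.eval x)^2 * f x -
      ∑ x ∈ S, nW S x * (x * (r.eval x)^2) * f x := by
    rw [← Finset.sum_sub_distrib]
    exact Finset.sum_congr rfl fun x _ => by rw [h]; ring
  linarith

open Polynomial in
lemma loewner_C4_even (S : Finset ℝ) (hS : ∀ x ∈ S, 0 < x) (m : ℕ) (hm : S.card = 2 * m)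
    (hm0 : 0 < m) (c : ℝ → ℝ) (hc : ∀ l : ℝ, 0 ≤ l → 0 ≤ ∑ x ∈ S, c x * (x + l)⁻¹) :
    0 ≤ ∑ x ∈ S, c x * f x := by
  set p : ℝ[X] := ∑ x ∈ S, C (- c x) * Lagrange.nodal (S.erase x) id with hp
  have heval : ∀ x ∈ S, nW S x * p.eval x = - c x := by
    intro x hx
    rw [hp, eval_finsetSum, Finset.sum_eq_single x]
    · rw [eval_mul, eval_C, Lagrange.eval_nodal]
      simp only [id]
      unfold nW
      have : ∏ y ∈ S.erase x, (x - y) ≠ 0 := by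
        have := nW_ne S x
        unfold nW at this
        exact fun h => this (by rw [h, inv_zero])
      field_simp
    · intro y hy hyx
      rw [eval_mul, Lagrange.eval_nodal, Finset.prod_eq_zero (Finset.mem_erase.2 ⟨hyx.symm, hx⟩)]
      · simp
      · simp
    · intro h; exact absurd hx h
  have hdeg : p.degree < (2 * m : ℕ) := by
    refine (degree_sum_le _ _).trans_lt ?_
    rw [Finset.sup_lt_iff (WithBot.bot_lt_coe _)]
    intro x hx
    refine lt_of_le_of_lt (degree_mul_le _ _) ?_
    refine lt_of_le_of_lt (add_le_add degree_C_le le_rfl) ?_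
    rw [Lagrange.degree_nodal, Finset.card_erase_of_mem hx, hm, zero_add]
    norm_cast; omega
  have := loewner_C3 f hf0 C1 S hS m hm p hdeg ?_
  · have e : ∑ x ∈ S, nW S x * p.eval x * f x = - ∑ x ∈ S, c x * f x := by
      rw [← Finset.sum_neg_distrib]
      exact Finset.sum_congr rfl fun x hx => by rw [heval x hx]; ring
    linarith
  intro l hl
  have key : p.eval (-l) = (∏ x ∈ S, (x + l)) * ∑ x ∈ S, c x * (x + l)⁻¹ := by
    rw [hp, eval_finsetSum, Finset.mul_sum]
    refine Finset.sum_congr rfl fun x hx => ?_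
    rw [eval_mul, eval_C, Lagrange.eval_nodal, ← Finset.mul_prod_erase S _ hx]
    have h1 : ∏ y ∈ S.erase x, (-l - id y) = - ∏ y ∈ S.erase x, (y + l) := by
      have : ∀ y ∈ S.erase x, (-l - id y) = (-1) * (y + l) := by intro y _; simp; ring
      rw [Finset.prod_congr rfl this, Finset.prod_mul_distrib, Finset.prod_const,
        Finset.card_erase_of_mem hx, hm, Odd.neg_one_pow ⟨m - 1, by omega⟩]
      ring
    have h2 : x + l ≠ 0 := by have := hS x hx; positivity
    rw [h1]; field_simp
  rw [key]
  exact mul_nonneg (Finset.prod_nonneg fun x hx => by have := hS x hx; positivity) (hc l hl)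

lemma loewner_C4 (S : Finset ℝ) (hS : ∀ x ∈ S, 0 < x)
    (c : ℝ → ℝ) (hc : ∀ l : ℝ, 0 ≤ l → 0 ≤ ∑ x ∈ S, c x * (x + l)⁻¹) :
    0 ≤ ∑ x ∈ S, c x * f x := by
  classical
  rcases Nat.even_or_odd' S.card with ⟨m, hm | hm⟩
  · rcases Nat.eq_zero_or_pos m with rfl | h0
    · have : S = ∅ := by simpa using hm
      simp [this]
    · exact loewner_C4_even f hf0 C1 S hS m hm h0 c hc
  · obtain ⟨z, hz⟩ := (Set.Ioi_infinite (0:ℝ)).exists_notMem_finset S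
    have hsum : ∀ g : ℝ → ℝ, ∑ x ∈ insert z S, (if x ∈ S then c x else 0) * g x
        = ∑ x ∈ S, c x * g x := by
      intro g
      rw [Finset.sum_insert hz.2, if_neg hz.2, zero_mul, zero_add]
      exact Finset.sum_congr rfl fun x hx => by rw [if_pos hx]
    have := loewner_C4_even f hf0 C1 (insert z S) (by
      intro x hx
      rcases Finset.mem_insert.1 hx with rfl | h
      · exact hz.1
      · exact hS x h) (m+1) (by rw [Finset.card_insert_of_notMem hz.2, hm]; ring) (by omega)
      (fun x => if x ∈ S then c x else 0) (by
        intro l hl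
        rw [hsum (fun x => (x + l)⁻¹)]
        exact hc l hl)
    rwa [hsum] at this
end c3


/-- kernel functions -/
noncomputable def kerF (x : Set.Ioi (0:ℝ)) : C(Set.Icc (0:ℝ) 1, ℝ) where
  toFun t := ((x.1 - 1) * t.1 + 1)⁻¹
  continuous_toFun := by
    apply Continuous.inv₀ (by fun_prop)
    rintro ⟨t, h0, h1⟩
    have hx : 0 < x.1 := x.2
    simp only
    rcases h0.eq_or_lt with h | h
    · simp [← h]
    · nlinarith [mul_pos hx h]

lemma kerF_apply (x : Set.Ioi (0:ℝ)) (t) : kerF x t = ((x.1 - 1) * t.1 + 1)⁻¹ := rfl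

lemma exists_nu (f : ℝ → ℝ)
    (pos : ∀ (S : Finset ℝ), (∀ x ∈ S, 0 < x) → ∀ (c : ℝ → ℝ),
      (∀ l ≥ 0, 0 ≤ ∑ x ∈ S, c x * (x+l)⁻¹) → 0 ≤ ∑ x ∈ S, c x * f x) :
    ∃ ν : Measure (Set.Icc (0:ℝ) 1), IsFiniteMeasure ν ∧
      ∀ x : Set.Ioi (0:ℝ), f x = ∫ t, kerF x t ∂ν := by
  classical
  let Φ := Finsupp.linearCombination ℝ kerF
  let L := Finsupp.linearCombination ℝ (fun x : Set.Ioi (0:ℝ) => f x)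
  have hpos : ∀ c, (∀ t, 0 ≤ Φ c t) → 0 ≤ L c := by
    intro c hc
    let c' : ℝ → ℝ := fun x => if h : 0 < x then c ⟨x, h⟩ else 0
    have key := pos (c.support.map (Function.Embedding.subtype _)) (by
      intro x hx
      simp at hx
      exact hx.1) c' (by
      intro l hl
      have hl0 : 0 < 1 + l := by linarith
      have := hc ⟨(1 + l)⁻¹, by positivity, inv_le_one_of_one_le₀ (by linarith)⟩
      simp only [Φ, Finsupp.linearCombination_apply, Finsupp.sum, ContinuousMap.sum_apply,
        ContinuousMap.smul_apply, kerF_apply, smul_eq_mul] at this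
      rw [Finset.sum_map]
      have h2 : ∑ x ∈ c.support, c x * ((x.1 - 1) * (1 + l)⁻¹ + 1)⁻¹
          = (1 + l) * ∑ x ∈ c.support, c' x.1 * (x.1 + l)⁻¹ := by
        rw [Finset.mul_sum]
        apply Finset.sum_congr rfl
        intro x _
        have hx : 0 < x.1 := x.2
        have : c' x.1 = c x := by simp only [c', dif_pos hx]
        rw [this]
        have e : (x.1 - 1) * (1 + l)⁻¹ + 1 = (x.1 + l) * (1 + l)⁻¹ := by field_simp; ring
        rw [e, mul_inv, inv_inv]; ring
      rw [h2] at this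
      exact nonneg_of_mul_nonneg_right this hl0)
    rw [Finset.sum_map] at key
    convert key using 1
    simp only [L, Finsupp.linearCombination_apply, Finsupp.sum, smul_eq_mul]
    apply Finset.sum_congr rfl
    intro x _
    have hx : 0 < x.1 := x.2
    have : c' x.1 = c x := by simp only [c', dif_pos hx]
    simp [this]
  have hker : LinearMap.ker Φ ≤ LinearMap.ker L := by
    intro c hc
    rw [LinearMap.mem_ker] at hc ⊢
    apply le_antisymm
    · have := hpos (-c) (by intro t; simp [hc])
      simpa using this
    · exact hpos c (by intro t; simp [hc])
  let g0 : LinearMap.range Φ →ₗ[ℝ] ℝ :=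
    ((LinearMap.ker Φ).liftQ L hker) ∘ₗ (Φ.quotKerEquivRange.symm : _ →ₗ[ℝ] _)
  have hg0 : ∀ c, g0 ⟨Φ c, LinearMap.mem_range_self Φ c⟩ = L c := by
    intro c
    have : Φ.quotKerEquivRange.symm ⟨Φ c, LinearMap.mem_range_self Φ c⟩
        = Submodule.Quotient.mk c := by
      rw [LinearEquiv.symm_apply_eq]
      ext1
      rfl
    simp only [g0, LinearMap.comp_apply, LinearEquiv.coe_coe, this]
    rfl
  let s : PointedCone ℝ C(Set.Icc (0:ℝ) 1, ℝ) := PointedCone.positive ℝ _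
  obtain ⟨g, hg1, hg2⟩ := riesz_extension s ⟨LinearMap.range Φ, g0⟩ (by
    rintro ⟨_, c, rfl⟩ hx
    have hx' : (0 : C(Set.Icc (0:ℝ) 1, ℝ)) ≤ Φ c := hx
    have : 0 ≤ g0 ⟨Φ c, LinearMap.mem_range_self Φ c⟩ := by
      rw [hg0]
      exact hpos c fun t => hx' t
    exact this) (by
    intro y
    refine ⟨⟨Φ (Finsupp.single ⟨1, Set.mem_Ioi.2 one_pos⟩ ‖y‖), LinearMap.mem_range_self _ _⟩, ?_⟩
    change (0 : C(Set.Icc (0:ℝ) 1, ℝ)) ≤ _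
    intro t
    have := y.norm_coe_le_norm t
    have := neg_abs_le (y t)
    simp [Φ, kerF_apply]
    rw [Real.norm_eq_abs] at *
    linarith)
  have hgm : ∀ u v : C(Set.Icc (0:ℝ) 1, ℝ), u ≤ v → g u ≤ g v := by
    intro u v h
    have := hg2 (v - u) (sub_nonneg.2 h)
    rw [map_sub] at this
    linarith
  let Λ : CompactlySupportedContinuousMap (Set.Icc (0:ℝ) 1) ℝ →ₚ[ℝ] ℝ :=
    { toFun u := g u.toContinuousMap
      map_add' u v := g.map_add _ _
      map_smul' c u := g.map_smul _ _
      monotone' u v h := hgm _ _ h }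
  refine ⟨RealRMK.rieszMeasure Λ, inferInstance, fun x => ?_⟩
  let u : CompactlySupportedContinuousMap (Set.Icc (0:ℝ) 1) ℝ :=
    { toFun := kerF x
      hasCompactSupport' := HasCompactSupport.of_compactSpace _ }
  have h1 := RealRMK.integral_rieszMeasure Λ u
  have h2 : Λ u = g (kerF x) := rfl
  have h3 : Φ (Finsupp.single x 1) = kerF x := by simp [Φ]
  have h4 := hg1 ⟨Φ (Finsupp.single x 1), LinearMap.mem_range_self _ _⟩
  have h5 := hg0 (Finsupp.single x 1)
  have h6 : g (Φ (Finsupp.single x 1)) = L (Finsupp.single x 1) := h4.trans h5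
  rw [h3] at h6
  have h7 : L (Finsupp.single x 1) = f x := by simp [L]
  rw [← h7, ← h6, ← h2, ← h1]
  rfl

lemma exists_mu (f : ℝ → ℝ) (ν : Measure (Set.Icc (0:ℝ) 1)) [IsFiniteMeasure ν]
      (hν : ∀ x : Set.Ioi (0:ℝ), f x = ∫ t, kerF x t ∂ν) :
    ∃ (α : ℝ) (μ : Measure ℝ), 0 ≤ α ∧ μ (Set.Ici (0 : ℝ))ᶜ = 0 ∧
        Integrable (fun l : ℝ => (1 + l)⁻¹) μ ∧
        ∀ x : ℝ, 0 < x → f x = α + ∫ l, (x + l)⁻¹ ∂μ := by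
  let z : Set.Icc (0:ℝ) 1 := ⟨0, by simp⟩
  let w : Set.Icc (0:ℝ) 1 → NNReal := fun t => Real.toNNReal (t.1)⁻¹
  have hw : Measurable w := by fun_prop
  let ψ : Set.Icc (0:ℝ) 1 → ℝ := fun t => (t.1)⁻¹ - 1
  have hψ : Measurable ψ := by fun_prop
  let ν' := (ν.restrict {z}ᶜ)
  have hz : MeasurableSet ({z}ᶜ : Set (Set.Icc (0:ℝ) 1)) := (measurableSet_singleton z).compl
  have hae : ∀ᵐ t ∂ν', 0 < t.1 := by
    refine ae_restrict_of_forall_mem hz fun t ht => ?_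
    refine lt_of_le_of_ne t.2.1 fun h => ht ?_
    exact Subtype.ext h.symm
  have hker : ∀ x : ℝ, ∀ hx : 0 < x, ∀ t : Set.Icc (0:ℝ) 1, 0 < t.1 →
      w t • (x + ψ t)⁻¹ = kerF ⟨x, hx⟩ t := by
    intro x hx t ht
    simp only [w, ψ, kerF_apply, NNReal.smul_def, smul_eq_mul,
      Real.coe_toNNReal _ (inv_pos.2 ht).le]
    rw [← mul_inv]
    congr 1
    field_simp
    ring
  have hkint : ∀ x, Integrable (fun t => kerF x t) ν := by
    intro x
    exact (kerF x).continuous.integrable_of_hasCompactSupport (HasCompactSupport.of_compactSpace _)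
  refine ⟨ν.real {z}, (ν'.withDensity (fun t => w t)).map ψ, measureReal_nonneg, ?_, ?_, ?_⟩
  · rw [Measure.map_apply hψ measurableSet_Ici.compl]
    have : ψ ⁻¹' (Set.Ici 0)ᶜ ⊆ {z} := by
      intro t ht
      by_contra h
      apply ht
      have h0 : 0 < t.1 := lt_of_le_of_ne t.2.1 fun h' => h (Subtype.ext h'.symm)
      have := (one_le_inv₀ h0).2 t.2.2
      change 0 ≤ (t.1)⁻¹ - 1
      linarith
    refine measure_mono_null this (withDensity_absolutelyContinuous _ _ ?_)
    simp [ν', Measure.restrict_apply]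
  · rw [integrable_map_measure (by fun_prop) hψ.aemeasurable,
      integrable_withDensity_iff_integrable_smul hw]
    refine ((hkint ⟨1, Set.mem_Ioi.2 one_pos⟩).restrict (s := {z}ᶜ)).congr ?_
    filter_upwards [hae] with t ht
    exact (hker 1 one_pos t ht).symm
  · intro x hx
    rw [integral_map hψ.aemeasurable (by fun_prop), integral_withDensity_eq_integral_smul hw]
    have e : ∫ t, w t • (x + ψ t)⁻¹ ∂ν' = ∫ t in {z}ᶜ, kerF ⟨x, hx⟩ t ∂ν := by
      apply integral_congr_ae
      filter_upwards [hae] with t ht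
      exact hker x hx t ht
    rw [e, hν ⟨x, hx⟩, ← integral_add_compl (measurableSet_singleton z) (hkint _)]
    congr 1
    simp [kerF_apply, z, Measure.real]


section conv
variable {H : Type*} [NormedAddCommGroup H] [InnerProductSpace ℂ H] [CompleteSpace H]

lemma conv_spec (A : H →L[ℂ] H) 
    (hs : spectrum ℂ A ⊆ (fun x : ℝ => (x : ℂ)) '' Set.Ioi (0 : ℝ)) :
    ∃ c : ℝ, 0 < c ∧ ∀ x ∈ spectrum ℝ A, c ≤ x := by
  have hpos : ∀ x ∈ spectrum ℝ A, 0 < x := by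
    intro x hx
    have : (algebraMap ℝ ℂ x) ∈ spectrum ℂ A := by
      rw [← spectrum.preimage_algebraMap ℂ] at hx
      exact hx
    obtain ⟨y, hy, hyx⟩ := hs this
    have : y = x := by simpa using hyx
    exact this ▸ hy
  rcases (spectrum ℝ A).eq_empty_or_nonempty with h | h
  · exact ⟨1, one_pos, by simp [h]⟩
  · obtain ⟨c, hc, hmin⟩ := (spectrum.isCompact A).exists_isLeast h
    exact ⟨c, hpos c hc, fun x hx => hmin hx⟩

lemma conv_cont (A : H →L[ℂ] H) (c : ℝ) (hc : 0 < c) (h : ∀ x ∈ spectrum ℝ A, c ≤ x) :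
    ContinuousOn (Function.uncurry (fun l x : ℝ => (x + l)⁻¹)) (Set.Ici 0 ×ˢ spectrum ℝ A) := by
  unfold Function.uncurry
  apply ContinuousOn.inv₀ (by fun_prop)
  rintro ⟨l, x⟩ ⟨hl, hx⟩
  have := h x hx
  have : 0 ≤ l := hl
  simp only
  linarith

lemma conv_bound (A : H →L[ℂ] H) (c : ℝ) (hc : 0 < c) (h : ∀ x ∈ spectrum ℝ A, c ≤ x)
    (l : ℝ) (hl : 0 ≤ l) : ∀ x ∈ spectrum ℝ A, ‖(x + l)⁻¹‖ ≤ (1 + c⁻¹) * (1 + l)⁻¹ := by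
  intro x hx
  have hcx := h x hx
  rw [Real.norm_of_nonneg (by positivity [hc.trans_le hcx])]
  have h1 : 0 < x + l := by linarith
  rw [← div_eq_mul_inv, le_div_iff₀ (by linarith), inv_mul_le_iff₀ h1]
  have : c⁻¹ * c = 1 := by field_simp
  have hci : 0 < c⁻¹ := inv_pos.2 hc
  nlinarith [mul_le_mul_of_nonneg_left hcx hci.le, mul_nonneg hci.le hl]

lemma conv_inv (A : H →L[ℂ] H) (hA : IsSelfAdjoint A)
    (c : ℝ) (hc : 0 < c) (h : ∀ x ∈ spectrum ℝ A, c ≤ x) (l : ℝ) (hl : 0 ≤ l) :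
    cfc (fun x : ℝ => (x + l)⁻¹) A = Ring.inverse (A + algebraMap ℝ _ l) ∧
      IsStrictlyPositive (A + algebraMap ℝ _ l) := by
  have e : cfc (fun x : ℝ => x + l) A = A + algebraMap ℝ _ l := by
    rw [cfc_add_const l (fun x => x) A, cfc_id' ℝ A]
  have hne : ∀ x ∈ spectrum ℝ A, x + l ≠ 0 := by
    intro x hx
    have := h x hx
    linarith
  refine ⟨?_, ?_⟩
  · rw [cfc_inv _ _ hne, e]
  · rw [← e]
    refine IsStrictlyPositive.iff_of_unital.2 ⟨cfc_nonneg fun x hx => ?_, ?_⟩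
    · have := h x hx
      linarith
    · exact (isUnit_cfc_iff _ _).2 hne

theorem conv_dir (f : ℝ → ℝ) (α : ℝ) (μ : Measure ℝ) (hμ : μ (Set.Ici (0 : ℝ))ᶜ = 0)
    (hint : Integrable (fun l : ℝ => (1 + l)⁻¹) μ)
    (hf : ∀ x : ℝ, 0 < x → f x = α + ∫ l, (x + l)⁻¹ ∂μ)
    (A B : H →L[ℂ] H) (hA : IsSelfAdjoint A) (hB : IsSelfAdjoint B)
    (hsA : spectrum ℂ A ⊆ (fun x : ℝ => (x : ℂ)) '' Set.Ioi (0 : ℝ))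
    (hsB : spectrum ℂ B ⊆ (fun x : ℝ => (x : ℂ)) '' Set.Ioi (0 : ℝ))
    (hAB : (B - A).IsPositive) : (cfc f A - cfc f B).IsPositive := by
  have hres : μ.restrict (Set.Ici 0) = μ := Measure.restrict_eq_self_of_ae_mem hμ
  have key : ∀ A : H →L[ℂ] H, IsSelfAdjoint A →
      spectrum ℂ A ⊆ (fun x : ℝ => (x : ℂ)) '' Set.Ioi (0 : ℝ) →
      IntegrableOn (fun l : ℝ => cfc (fun x : ℝ => (x + l)⁻¹) A) (Set.Ici 0) μ ∧
      cfc f A = algebraMap ℝ _ α + ∫ l in Set.Ici 0, cfc (fun x : ℝ => (x + l)⁻¹) A ∂μ := by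
    intro A hA hs
    obtain ⟨c, hc, h⟩ := conv_spec A hs
    have hbi : HasFiniteIntegral (fun l : ℝ => (1 + c⁻¹) * (1 + l)⁻¹) (μ.restrict (Set.Ici 0)) :=
      (hint.restrict.const_mul _).2
    have hb : ∀ᵐ l ∂(μ.restrict (Set.Ici 0)), ∀ x ∈ spectrum ℝ A,
        ‖(x + l)⁻¹‖ ≤ (1 + c⁻¹) * (1 + l)⁻¹ :=
      ae_restrict_of_forall_mem measurableSet_Ici fun l hl => conv_bound A c hc h l hl
    have i1 := integrableOn_cfc measurableSet_Ici (fun l x : ℝ => (x + l)⁻¹) _ A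
      (conv_cont A c hc h) hb hbi hA
    have i2 := cfc_setIntegral measurableSet_Ici (fun l x : ℝ => (x + l)⁻¹) _ A
      (conv_cont A c hc h) hb hbi hA
    refine ⟨i1, ?_⟩
    rw [← i2]
    have e1 : cfc f A = cfc (fun x => α + ∫ l in Set.Ici 0, (x + l)⁻¹ ∂μ) A := by
      apply cfc_congr
      intro x hx
      simp only [hres]
      exact hf x (hc.trans_le (h x hx))
    rw [e1]
    have hcont : ContinuousOn (fun x : ℝ => ∫ l in Set.Ici 0, (x + l)⁻¹ ∂μ) (spectrum ℝ A) := by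
      apply continuousOn_of_dominated (bound := fun l => (1 + c⁻¹) * (1 + l)⁻¹)
      · intro x hx
        exact (by fun_prop : Measurable fun l : ℝ => (x + l)⁻¹).aestronglyMeasurable
      · intro x hx
        filter_upwards [hb] with l hl using hl x hx
      · exact hint.restrict.const_mul _
      · refine ae_restrict_of_forall_mem measurableSet_Ici fun l hl => ?_
        apply ContinuousOn.inv₀ (by fun_prop)
        intro x hx
        have := h x hx
        have : 0 ≤ l := hl
        linarith
    exact cfc_const_add _ _ _ hcont hA
  obtain ⟨iA, eA⟩ := key A hA hsA
  obtain ⟨iB, eB⟩ := key B hB hsB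
  rw [eA, eB, add_sub_add_left_eq_sub]
  rw [← ContinuousLinearMap.le_def]
  refine integral_mono_ae iB iA ?_
  obtain ⟨c, hc, h⟩ := conv_spec A hsA
  obtain ⟨d, hd, h'⟩ := conv_spec B hsB
  refine ae_restrict_of_forall_mem measurableSet_Ici fun l hl => ?_
  obtain ⟨a1, a2⟩ := conv_inv A hA c hc h l hl
  obtain ⟨b1, b2⟩ := conv_inv B hB d hd h' l hl
  simp only [a1, b1]
  refine CStarAlgebra.antitoneOn_ringInverse a2 b2 ?_
  have : A ≤ B := (ContinuousLinearMap.le_def A B).2 hAB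
  gcongr
end conv

variable {H : Type*} [NormedAddCommGroup H] [InnerProductSpace ℂ H] [CompleteSpace H]

/-- A continuous, non-negative, not identically zero real function on `(0, ∞)` is operator
monotone decreasing if and only if `f(x) = α + ∫_{[0,∞)} 1/(x+λ) dμ(λ)` with `α ≥ 0` and `μ`
a positive measure on `[0, ∞)` with `∫ (1+λ)⁻¹ dμ(λ) < ∞`. -/
theorem stmt15 [TopologicalSpace.SeparableSpace H] (hinf : ¬ FiniteDimensional ℂ H)
    (f : ℝ → ℝ) (hf : ContinuousOn f (Set.Ioi (0 : ℝ)))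
    (hf0 : ∀ x : ℝ, 0 < x → 0 ≤ f x) (hfne : ∃ x : ℝ, 0 < x ∧ f x ≠ 0) :
    (∀ A B : H →L[ℂ] H, IsSelfAdjoint A → IsSelfAdjoint B →
        spectrum ℂ A ⊆ (fun x : ℝ => (x : ℂ)) '' Set.Ioi (0 : ℝ) →
        spectrum ℂ B ⊆ (fun x : ℝ => (x : ℂ)) '' Set.Ioi (0 : ℝ) →
        (B - A).IsPositive → (cfc f A - cfc f B).IsPositive)
    ↔ (∃ (α : ℝ) (μ : Measure ℝ), 0 ≤ α ∧ μ (Set.Ici (0 : ℝ))ᶜ = 0 ∧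
        Integrable (fun l : ℝ => (1 + l)⁻¹) μ ∧
        ∀ x : ℝ, 0 < x → f x = α + ∫ l, (x + l)⁻¹ ∂μ) := by
  constructor
  · intro hmono
    obtain ⟨ν, hνf, hν⟩ := exists_nu f (fun S hS c hc => loewner_C4 f hf0
      (fun S hS m hm q hq => loewner_C1 hinf f hmono S hS m hm q hq) S hS c hc)
    exact exists_mu f ν hν
  · rintro ⟨α, μ, hα, hμ, hint, hx⟩ A B hA hB hsA hsB hAB
    exact conv_dir f α μ hμ hint hx A B hA hB hsA hsB hAB
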